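/- For every integer n ≥ 1 and all real numbers q, q' > 1, the concrete quantum sphere C*-algebras A_n(q) and A_n(q') are isomorphic as unital C*-algebras (both being isomorphic to the C*-algebra of the subquotient groupoid 𝔉_n); in particular C(S_q^{2n+1}) is independent of q. -/

import Mathlib

noncomputable section

/-- The Hilbert space `ℓ²(ℤ) ⊗ H_n = ℓ²(ℤ × ℕⁿ)`, where `H_n = ℓ²(ℕⁿ)`. -/
abbrev HZ (n : ℕ) : Type := lp (fun _ : ℤ × (Fin n → ℕ) => ℂ) 2

/-- The standard orthonormal basis vectors `e_m ⊗ e_k` of `ℓ²(ℤ × ℕⁿ)`. -/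
def ez {n : ℕ} (m : ℤ) (k : Fin n → ℕ) : HZ n := lp.single 2 (m, k) 1

/-- For an index `j` with `1 ≤ j+1 ≤ n` (so `w_{j+2} = γ^{⊗(n-1-j)} ⊗ α* ⊗ 1^{⊗j}`),
the (0-based) coordinate `n - 1 - j` at which the shift `α*` acts. -/
def shiftIdx {n : ℕ} (j : Fin n) : Fin n := ⟨n - 1 - (j : ℕ), by have := j.isLt; omega⟩

/-- `IsVFamily q v` says that `v 0, …, v n` are the operators `v_i = S ⊗ w_i`
(`1 ≤ i ≤ n+1`) on `ℓ²(ℤ) ⊗ ℓ²(ℕⁿ)`, where `S` is the bilateral shift and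
`w_1 e_k = q^{-(k_1+⋯+k_n)} e_k`,
`w_i e_k = q^{-(k_1+⋯+k_{n+1-i})} (1-q^{-2(k_{n+2-i}+1)})^{1/2} e_{k+δ_{n+2-i}}` for
`2 ≤ i ≤ n+1`.  The `v_i` are the images of the generators `u_{n+1,i}` of
`C(S_q^{2n+1})` under the faithful representation `(τ'_{n+1} ⊗ π_{n(n-1)⋯21})Δⁿ`. -/
def IsVFamily (q : ℝ) {n : ℕ} (v : Fin (n + 1) → (HZ n →L[ℂ] HZ n)) : Prop :=
  (∀ (m : ℤ) (k : Fin n → ℕ),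
    v 0 (ez m k) = (q ^ (-(∑ s, (k s : ℤ)))) • ez (m + 1) k) ∧
  (∀ (j : Fin n) (m : ℤ) (k : Fin n → ℕ),
    v j.succ (ez m k) =
      ((q ^ (-(∑ s ∈ Finset.univ.filter (fun s : Fin n => (s : ℕ) < n - 1 - (j : ℕ)), (k s : ℤ)))) *
          Real.sqrt (1 - q ^ (-2 * ((k (shiftIdx j) : ℤ) + 1)))) •
        ez (m + 1) (Function.update k (shiftIdx j) (k (shiftIdx j) + 1)))

/-- `A_n(q)`: the unital C*-subalgebra of bounded operators on `ℓ²(ℤ) ⊗ ℓ²(ℕⁿ)` generated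
by `v_1, …, v_{n+1}`; the concrete realization of the quantum sphere algebra
`C(S_q^{2n+1})`. -/
def sphereAlg {n : ℕ} (v : Fin (n + 1) → (HZ n →L[ℂ] HZ n)) :
    StarSubalgebra ℂ (HZ n →L[ℂ] HZ n) :=
  (StarAlgebra.adjoin ℂ (Set.range v)).topologicalClosure

/-!
The algebras `A_n(q)` and `A_n(q')` are not merely isomorphic, they coincide. All `v_i` are weighted
shifts of the standard basis, and their moduli are diagonal. From `|v_1|` and the relation
`(q^{-(k_1+⋯+k_t)})² = |v_{n+1-t}|² + q⁻² (q^{-(k_1+⋯+k_{t+1})})²`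
one finds, by descending induction on `t`, that `A_n(q)` contains the diagonal operators with
eigenvalues `q^{-(k_1+⋯+k_t)}`. The continuous function `x ↦ x ^ (log q' / log q)` turns these into
the same operators for `q'`, so that `A_n(q)` contains the moduli of the generators of `A_n(q')`.
The generators themselves shift the basis in the same way for both parameters, and the weights for
`q'` tend to zero wherever those for `q` do. Hence each generator of `A_n(q')` is a norm limit of
the corresponding generator of `A_n(q)` times diagonal operators of `A_n(q)`.
-/

open Filter Topology

section WeightedShift

variable {ι 𝕜 E : Type*} [RCLike 𝕜] [NormedAddCommGroup E] [InnerProductSpace 𝕜 E]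

/-- `T` is the weighted shift `b i ↦ c i • b (σ i)` along the self-map `σ` of the index set of the
Hilbert basis `b`, with real weights `c`. For `σ = id` it is the diagonal operator with
eigenvalues `c`. -/
def IsWeightedShift (b : HilbertBasis ι 𝕜 E) (σ : ι → ι) (c : ι → ℝ) (T : E →L[𝕜] E) : Prop :=
  ∀ i, T (b i) = (c i : 𝕜) • b (σ i)

namespace IsWeightedShift

variable {b : HilbertBasis ι 𝕜 E} {σ τ : ι → ι} {c d : ι → ℝ} {S T : E →L[𝕜] E}

theorem algebraMap (b : HilbertBasis ι 𝕜 E) (r : ℝ) :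
    IsWeightedShift b id (fun _ ↦ r) (algebraMap 𝕜 (E →L[𝕜] E) r) :=
  fun _ ↦ rfl

theorem add (hS : IsWeightedShift b σ c S) (hT : IsWeightedShift b σ d T) :
    IsWeightedShift b σ (c + d) (S + T) := fun i ↦ by
  simp only [add_apply, hS i, hT i, ← add_smul, Pi.add_apply, RCLike.ofReal_add]

theorem sub (hS : IsWeightedShift b σ c S) (hT : IsWeightedShift b σ d T) :
    IsWeightedShift b σ (c - d) (S - T) := fun i ↦ by
  simp only [sub_apply, hS i, hT i, ← sub_smul, Pi.sub_apply, RCLike.ofReal_sub]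

theorem mul (hS : IsWeightedShift b σ c S) (hT : IsWeightedShift b τ d T) :
    IsWeightedShift b (σ ∘ τ) (c ∘ τ * d) (S * T) := fun i ↦ by
  simp only [mul_apply_eq_comp, hT i, map_smul, hS (τ i), smul_smul, Pi.mul_apply,
    Function.comp_apply, RCLike.ofReal_mul, mul_comm]

theorem ext (hS : IsWeightedShift b σ c S) (hT : IsWeightedShift b σ c T) : S = T := by
  refine ContinuousLinearMap.ext_on
    (Submodule.dense_iff_topologicalClosure_eq_top.mpr b.dense_span) ?_
  rintro _ ⟨i, rfl⟩
  rw [hS i, hT i]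

theorem norm_le (hσ : σ.Injective) (hT : IsWeightedShift b σ c T) {C : ℝ} (hC : 0 ≤ C)
    (hc : ∀ i, |c i| ≤ C) : ‖T‖ ≤ C := by
  have norm_sq_sum {v : ι → E} (hv : Orthonormal 𝕜 v) (a : ι → 𝕜) (s : Finset ι) :
      ‖∑ i ∈ s, a i • v i‖ ^ 2 = ∑ i ∈ s, ‖a i‖ ^ 2 := by
    simpa using hv.orthogonalFamily.norm_sum a s
  refine T.opNorm_le_bound hC fun x ↦ ?_
  have partial_le (s : Finset ι) :
      ‖T (∑ i ∈ s, b.repr x i • b i)‖ ≤ C * ‖∑ i ∈ s, b.repr x i • b i‖ := by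
    refine le_of_sq_le_sq ?_ (by positivity)
    calc ‖T (∑ i ∈ s, b.repr x i • b i)‖ ^ 2
        = ∑ i ∈ s, (|c i| * ‖b.repr x i‖) ^ 2 := by
          simpa [hT _, smul_smul, mul_comm] using
            norm_sq_sum (b.orthonormal.comp σ hσ) (fun i ↦ b.repr x i * (c i : 𝕜)) s
      _ ≤ ∑ i ∈ s, (C * ‖b.repr x i‖) ^ 2 := by gcongr with i; exact hc i
      _ = (C * ‖∑ i ∈ s, b.repr x i • b i‖) ^ 2 := by
          simp only [mul_pow, norm_sq_sum b.orthonormal, Finset.mul_sum]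
  have hx : Tendsto (fun s ↦ ∑ i ∈ s, b.repr x i • b i) atTop (𝓝 x) := b.hasSum_repr x
  exact le_of_tendsto_of_tendsto' ((T.continuous.tendsto x).comp hx).norm
    (hx.norm.const_mul C) partial_le

variable [CompleteSpace E]

theorem star_apply (hσ : σ.Injective) (hT : IsWeightedShift b σ c T) (i : ι) :
    star T (b (σ i)) = (c i : 𝕜) • b i := by
  classical
  refine b.repr.injective (lp.ext (funext fun j ↦ ?_))
  rw [b.repr_apply_apply, b.repr_apply_apply, ContinuousLinearMap.star_eq_adjoint,
    ContinuousLinearMap.adjoint_inner_right, hT j, inner_smul_left, inner_smul_right,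
    orthonormal_iff_ite.mp b.orthonormal, orthonormal_iff_ite.mp b.orthonormal]
  rcases eq_or_ne j i with rfl | hji
  · simp
  · simp [hji, hσ.ne hji]

theorem star_mul_self (hσ : σ.Injective) (hT : IsWeightedShift b σ c T) :
    IsWeightedShift b id (c ^ 2) (star T * T) := fun i ↦ by
  simp [hT i, hT.star_apply hσ, smul_smul, sq]

theorem isSelfAdjoint (hT : IsWeightedShift b id c T) : IsSelfAdjoint T :=
  ext (hT.star_apply Function.injective_id) hT

end IsWeightedShift

end WeightedShift

section FunctionalCalculus

variable {ι E : Type*} [NormedAddCommGroup E] [InnerProductSpace ℂ E] [CompleteSpace E]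

theorem cfc_apply_of_apply_eq_smul {T : E →L[ℂ] E} (hT : IsSelfAdjoint T) {f : ℝ → ℝ}
    (hf : ContinuousOn f (spectrum ℝ T)) {r : ℝ} {x : E} (hx : T x = (r : ℂ) • x) :
    cfc f T x = (f r : ℂ) • x := by
  rcases eq_or_ne x 0 with rfl | hx₀
  · simp
  have hr : r ∈ spectrum ℝ T := by
    rw [← spectrum.algebraMap_mem_iff ℂ, ContinuousLinearMap.spectrum_eq]
    exact (Module.End.hasEigenvalue_of_hasEigenvector
      ⟨Module.End.mem_eigenspace_iff.mpr hx, hx₀⟩).mem_spectrum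
  let ρ : spectrum ℝ T := ⟨r, hr⟩
  suffices h : ∀ g : C(spectrum ℝ T, ℝ), cfcHom hT g x = (g ρ : ℂ) • x by
    rw [cfc_apply f T hT hf]
    exact h _
  intro g
  induction g using ContinuousMap.induction_on_of_compact with
  | const s =>
    rw [show ContinuousMap.const _ s = algebraMap ℝ C(spectrum ℝ T, ℝ) s from rfl,
      AlgHomClass.commutes]
    rfl
  | id => rw [cfcHom_id]; exact hx
  | star_id => rw [map_star, cfcHom_id, hT.star_eq]; exact hx
  | add g h hg hh => simp [hg, hh, add_smul]
  | mul g h hg hh => simp [hg, hh, mul_comm (g ρ : ℂ), mul_smul]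
  | frequently g hg =>
    refine hg.mem_of_closed (isClosed_eq ?_ ?_)
    · exact (ContinuousLinearMap.apply ℂ E x).continuous.comp (cfcHom_continuous hT)
    · fun_prop

theorem IsWeightedShift.cfc {b : HilbertBasis ι ℂ E} {c : ι → ℝ} {T : E →L[ℂ] E}
    (hT : IsWeightedShift b id c T) {f : ℝ → ℝ} (hf : Continuous f) :
    IsWeightedShift b id (f ∘ c) (cfc f T) := fun i ↦
  cfc_apply_of_apply_eq_smul hT.isSelfAdjoint hf.continuousOn (hT i)

end FunctionalCalculus

section DiagonalWeights

variable {ι E : Type*} [NormedAddCommGroup E] [InnerProductSpace ℂ E] [CompleteSpace E]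
  {b : HilbertBasis ι ℂ E} {A : StarSubalgebra ℂ (E →L[ℂ] E)} {σ : ι → ι} {c c' : ι → ℝ}
  {V V' : E →L[ℂ] E}

/-- The real sequences `c` for which the diagonal operator `b i ↦ c i • b i` exists and belongs
to `A`. -/
def diagonalWeights (b : HilbertBasis ι ℂ E) (A : StarSubalgebra ℂ (E →L[ℂ] E)) :
    Subalgebra ℝ (ι → ℝ) where
  carrier := {c | ∃ T ∈ A, IsWeightedShift b id c T}
  algebraMap_mem' r := ⟨_, A.algebraMap_mem r, .algebraMap b r⟩
  add_mem' := fun ⟨_, hSA, hS⟩ ⟨_, hTA, hT⟩ ↦ ⟨_, add_mem hSA hTA, hS.add hT⟩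
  mul_mem' := fun ⟨_, hSA, hS⟩ ⟨_, hTA, hT⟩ ↦ ⟨_, mul_mem hSA hTA, hS.mul hT⟩

theorem comp_mem_diagonalWeights (hA : IsClosed (A : Set (E →L[ℂ] E)))
    (hc : c ∈ diagonalWeights b A) {f : ℝ → ℝ} (hf : Continuous f) :
    f ∘ c ∈ diagonalWeights b A := by
  obtain ⟨T, hTA, hT⟩ := hc
  exact ⟨cfc f T, cfc_mem f hTA, hT.cfc hf⟩

theorem mem_diagonalWeights_of_sq_mem (hA : IsClosed (A : Set (E →L[ℂ] E))) (hc : 0 ≤ c)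
    (hc_sq : c ^ 2 ∈ diagonalWeights b A) : c ∈ diagonalWeights b A := by
  have h := comp_mem_diagonalWeights hA hc_sq Real.continuous_sqrt
  rwa [show Real.sqrt ∘ (c ^ 2) = c from funext fun i ↦ Real.sqrt_sq (hc i)] at h

theorem IsWeightedShift.mem_diagonalWeights (hA : IsClosed (A : Set (E →L[ℂ] E)))
    (hσ : σ.Injective) (hV : IsWeightedShift b σ c V) (hVA : V ∈ A) (hc : 0 ≤ c) :
    c ∈ diagonalWeights b A :=
  mem_diagonalWeights_of_sq_mem hA hc
    ⟨star V * V, mul_mem (star_mem hVA) hVA, hV.star_mul_self hσ⟩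

theorem abs_sub_mul_mul_inv_max_le {x y κ ε : ℝ} (hx : 0 ≤ x) (hκ : 0 < κ) (hε : 0 ≤ ε)
    (h : x < κ → |y| ≤ ε) : |y - x * (y * (max x κ)⁻¹)| ≤ ε := by
  rcases lt_or_ge x κ with hxκ | hκx
  · have h_ratio : x * κ⁻¹ ≤ 1 := by rw [← div_eq_mul_inv]; exact (div_le_one hκ).mpr hxκ.le
    have h_nonneg : 0 ≤ x * κ⁻¹ := by positivity
    rw [max_eq_right hxκ.le]
    calc |y - x * (y * κ⁻¹)| = |y| * |1 - x * κ⁻¹| := by rw [← abs_mul]; ring_nf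
      _ ≤ |y| * 1 := by gcongr; rw [abs_le]; constructor <;> linarith
      _ ≤ ε := by rw [mul_one]; exact h hxκ
  · have hx₀ : x ≠ 0 := (hκ.trans_le hκx).ne'
    rwa [max_eq_left hκx, mul_left_comm, mul_inv_cancel₀ hx₀, mul_one, sub_self, abs_zero]

-- The operator `V'` is the norm limit of `V * D κ` as `κ → 0`, where `D κ` is diagonal with
-- eigenvalues `c' / max c κ`.
theorem IsWeightedShift.mem_of_tendsto (hA : IsClosed (A : Set (E →L[ℂ] E))) (hσ : σ.Injective)
    (hV : IsWeightedShift b σ c V) (hVA : V ∈ A) (hc : 0 ≤ c)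
    (hV' : IsWeightedShift b σ c' V') (hc' : c' ∈ diagonalWeights b A)
    (h : Tendsto c' (comap c (𝓝 0)) (𝓝 0)) : V' ∈ A := by
  rw [← SetLike.mem_coe, ← hA.closure_eq, Metric.mem_closure_iff]
  intro ε hε
  obtain ⟨κ, hκ, hc'_small⟩ :=
    ((Metric.nhds_basis_ball.comap c).tendsto_iff Metric.nhds_basis_ball).mp h _ (half_pos hε)
  have h_inv : (fun y ↦ (max y κ)⁻¹) ∘ c ∈ diagonalWeights b A :=
    comp_mem_diagonalWeights hA (hV.mem_diagonalWeights hA hσ hVA hc)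
      ((continuous_id.max continuous_const).inv₀ fun _ ↦ (lt_max_of_lt_right hκ).ne')
  obtain ⟨D, hDA, hD⟩ := mul_mem hc' h_inv
  refine ⟨V * D, mul_mem hVA hDA, ?_⟩
  have h_norm : ‖V' - V * D‖ ≤ ε / 2 := by
    refine (hV'.sub (hV.mul hD)).norm_le hσ (half_pos hε).le fun i ↦ ?_
    refine abs_sub_mul_mul_inv_max_le (hc i) hκ (half_pos hε).le fun hi ↦ ?_
    have hi_ball : i ∈ c ⁻¹' Metric.ball 0 κ := by
      simpa [abs_of_nonneg (hc i)] using hi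
    simpa using (Metric.mem_ball.mp (hc'_small i hi_ball)).le
  rw [dist_eq_norm]
  linarith

end DiagonalWeights

section SphereWeights

variable {n : ℕ} {q q' : ℝ}

/-- The eigenvalue `q^{-(k_1+⋯+k_t)}` of `γ^{⊗t} ⊗ 1^{⊗(n-t)}` at the basis vector `e_k`. -/
def gammaWeight (q : ℝ) (t : ℕ) (k : Fin n → ℕ) : ℝ :=
  q ^ (-∑ s ∈ {s : Fin n | (s : ℕ) < t}, (k s : ℤ))

/-- The weight of `γ^{⊗t} ⊗ α* ⊗ 1^{⊗(n-1-t)}` at the basis vector `e_k`. -/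
def shiftWeight (q : ℝ) (t : Fin n) (k : Fin n → ℕ) : ℝ :=
  gammaWeight q t k * √(1 - q ^ (-2 * ((k t : ℤ) + 1)))

theorem gammaWeight_pos (hq : 0 < q) (t : ℕ) (k : Fin n → ℕ) : 0 < gammaWeight q t k :=
  zpow_pos hq _

theorem gammaWeight_self (q : ℝ) (k : Fin n → ℕ) : gammaWeight q n k = q ^ (-∑ s, (k s : ℤ)) := by
  simp [gammaWeight]

theorem gammaWeight_succ (hq : q ≠ 0) (t : Fin n) (k : Fin n → ℕ) :
    gammaWeight q (t + 1) k = gammaWeight q t k * q ^ (-(k t : ℤ)) := by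
  have h_filter : ({s | (s : ℕ) < t + 1} : Finset (Fin n)) =
      insert t ({s | (s : ℕ) < t} : Finset (Fin n)) := by
    ext s
    simp only [Finset.mem_filter, Finset.mem_univ, true_and, Finset.mem_insert, Fin.ext_iff]
    omega
  rw [gammaWeight, h_filter, Finset.sum_insert (by simp), gammaWeight, ← zpow_add₀ hq]
  congr 1
  ring

theorem gammaWeight_eq_rpow_logb (hq : 1 < q) (hq' : 0 < q') (t : ℕ) (k : Fin n → ℕ) :
    gammaWeight q' t k = gammaWeight q t k ^ Real.logb q q' := by
  have hq₀ : 0 < q := one_pos.trans hq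
  rw [gammaWeight, gammaWeight, ← Real.rpow_zpow_comm hq₀.le, Real.rpow_logb hq₀ hq.ne' hq']

theorem shiftWeight_nonneg (hq : 0 < q) (t : Fin n) (k : Fin n → ℕ) : 0 ≤ shiftWeight q t k :=
  mul_nonneg (gammaWeight_pos hq t k).le (Real.sqrt_nonneg _)

theorem shiftWeight_le_gammaWeight (hq : 0 < q) (t : Fin n) (k : Fin n → ℕ) :
    shiftWeight q t k ≤ gammaWeight q t k := by
  refine mul_le_of_le_one_right (gammaWeight_pos hq t k).le (Real.sqrt_le_one.mpr ?_)
  linarith [zpow_pos hq (-2 * ((k t : ℤ) + 1))]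

theorem mul_gammaWeight_le_shiftWeight (hq : 1 < q) (t : Fin n) (k : Fin n → ℕ) :
    √(1 - q ^ (-2 : ℤ)) * gammaWeight q t k ≤ shiftWeight q t k := by
  rw [shiftWeight, mul_comm]
  have h_exp : -2 * ((k t : ℤ) + 1) ≤ -2 := by linarith [Int.natCast_nonneg (k t)]
  have := (gammaWeight_pos (one_pos.trans hq) t k).le
  gcongr
  exact hq.le

theorem shiftWeight_sq (hq : 1 < q) (t : Fin n) (k : Fin n → ℕ) :
    shiftWeight q t k ^ 2 = gammaWeight q t k ^ 2 - q ^ (-2 : ℤ) * gammaWeight q (t + 1) k ^ 2 := by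
  have hq₀ : q ≠ 0 := (one_pos.trans hq).ne'
  have h_le : q ^ (-2 * ((k t : ℤ) + 1)) ≤ 1 := zpow_le_one_of_nonpos₀ hq.le (by omega)
  have h_exp : q ^ (-2 * ((k t : ℤ) + 1)) = q ^ (-2 : ℤ) * (q ^ (-(k t : ℤ))) ^ 2 := by
    rw [← zpow_natCast, ← zpow_mul, ← zpow_add₀ hq₀]
    congr 1
    push_cast
    ring
  rw [shiftWeight, mul_pow, Real.sq_sqrt (sub_nonneg.mpr h_le), h_exp, gammaWeight_succ hq₀]
  ring

theorem tendsto_comap_of_le_rpow {ι : Type*} {w w' g : ι → ℝ} {C a : ℝ} (hC : 0 < C) (ha : 0 < a)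
    (hg : 0 ≤ g) (hgw : ∀ i, C * g i ≤ w i) (hw' : 0 ≤ w') (hw'g : ∀ i, w' i ≤ g i ^ a) :
    Tendsto w' (comap w (𝓝 0)) (𝓝 0) := by
  have hw : Tendsto (fun i ↦ C⁻¹ * w i) (comap w (𝓝 0)) (𝓝 0) := by
    simpa using (tendsto_comap (f := w) (x := 𝓝 0)).const_mul C⁻¹
  have hg_lim : Tendsto g (comap w (𝓝 0)) (𝓝 0) :=
    squeeze_zero hg (fun i ↦ (le_inv_mul_iff₀ hC).mpr (hgw i)) hw
  refine squeeze_zero hw' hw'g ?_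
  simpa [Real.zero_rpow ha.ne'] using hg_lim.rpow_const (Or.inr ha.le)

end SphereWeights

section QuantumSphere

variable {n : ℕ} {q q' : ℝ} {v v' : Fin (n + 1) → (HZ n →L[ℂ] HZ n)}

/-- The standard Hilbert basis `e_m ⊗ e_k` of `ℓ²(ℤ × ℕⁿ)`. -/
def stdBasis (n : ℕ) : HilbertBasis (ℤ × (Fin n → ℕ)) ℂ (HZ n) := default

theorem stdBasis_apply (i : ℤ × (Fin n → ℕ)) : stdBasis n i = ez i.1 i.2 :=
  ((stdBasis n).repr_symm_single i).symm

theorem isClosed_sphereAlg (v : Fin (n + 1) → (HZ n →L[ℂ] HZ n)) :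
    IsClosed (sphereAlg v : Set (HZ n →L[ℂ] HZ n)) :=
  StarSubalgebra.isClosed_topologicalClosure _

theorem apply_mem_sphereAlg (v : Fin (n + 1) → (HZ n →L[ℂ] HZ n)) (i : Fin (n + 1)) :
    v i ∈ sphereAlg v :=
  StarSubalgebra.le_topologicalClosure _ (StarAlgebra.subset_adjoin ℂ _ ⟨i, rfl⟩)

namespace IsVFamily

theorem isWeightedShift_zero (hv : IsVFamily q v) :
    IsWeightedShift (stdBasis n) (· + (1, 0)) (fun i ↦ gammaWeight q n i.2) (v 0) := fun i ↦ by
  simp only [stdBasis_apply, hv.1, gammaWeight_self, Prod.fst_add, Prod.snd_add, add_zero]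
  exact RCLike.real_smul_eq_coe_smul (K := ℂ) _ _

theorem isWeightedShift_succ (hv : IsVFamily q v) (j : Fin n) :
    IsWeightedShift (stdBasis n) (· + (1, Pi.single (shiftIdx j) 1))
      (fun i ↦ shiftWeight q (shiftIdx j) i.2) (v j.succ) := fun i ↦ by
  have h_update : Function.update i.2 (shiftIdx j) (i.2 (shiftIdx j) + 1) =
      i.2 + Pi.single (shiftIdx j) 1 := by
    ext s
    rcases eq_or_ne s (shiftIdx j) with rfl | hs
    · simp
    · simp [hs]
  simp only [stdBasis_apply, hv.2, h_update, Prod.fst_add, Prod.snd_add]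
  exact RCLike.real_smul_eq_coe_smul (K := ℂ) _ (ez (n := n) _ _)

theorem gammaWeight_mem_diagonalWeights (hq : 1 < q) (hv : IsVFamily q v) {t : ℕ} (ht : t ≤ n) :
    (fun i ↦ gammaWeight q t i.2) ∈ diagonalWeights (stdBasis n) (sphereAlg v) := by
  have hq₀ : 0 < q := one_pos.trans hq
  have hA := isClosed_sphereAlg v
  induction ht using Nat.decreasingInduction with
  | self =>
    exact hv.isWeightedShift_zero.mem_diagonalWeights hA (add_left_injective _)
      (apply_mem_sphereAlg v 0) fun i ↦ (gammaWeight_pos hq₀ n i.2).le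
  | of_succ t ht ih =>
    let s : Fin n := ⟨t, ht⟩
    have hs : shiftIdx s.rev = s := Fin.ext <| by
      change n - 1 - (n - (t + 1)) = t
      omega
    have h_shift : (fun i ↦ shiftWeight q s i.2) ∈ diagonalWeights (stdBasis n) (sphereAlg v) := by
      have h := hv.isWeightedShift_succ s.rev
      rw [hs] at h
      exact h.mem_diagonalWeights hA (add_left_injective _) (apply_mem_sphereAlg v _)
        fun i ↦ shiftWeight_nonneg hq₀ s i.2
    refine mem_diagonalWeights_of_sq_mem hA (fun i ↦ (gammaWeight_pos hq₀ t i.2).le) ?_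
    convert add_mem (pow_mem h_shift 2)
      (Subalgebra.smul_mem _ (pow_mem ih 2) (q ^ (-2 : ℤ))) using 1
    ext i
    simp [shiftWeight_sq hq, s]

theorem gammaWeight_base_change_mem_diagonalWeights (hq : 1 < q) (hq' : 1 < q')
    (hv : IsVFamily q v) {t : ℕ} (ht : t ≤ n) :
    (fun i ↦ gammaWeight q' t i.2) ∈ diagonalWeights (stdBasis n) (sphereAlg v) := by
  convert comp_mem_diagonalWeights (isClosed_sphereAlg v)
    (hv.gammaWeight_mem_diagonalWeights hq ht)
    (Real.continuous_rpow_const (Real.logb_pos hq hq').le) using 1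
  exact funext fun i ↦ gammaWeight_eq_rpow_logb hq (one_pos.trans hq') t i.2

theorem shiftWeight_base_change_mem_diagonalWeights (hq : 1 < q) (hq' : 1 < q') (hv : IsVFamily q v)
    (t : Fin n) :
    (fun i ↦ shiftWeight q' t i.2) ∈ diagonalWeights (stdBasis n) (sphereAlg v) := by
  refine mem_diagonalWeights_of_sq_mem (isClosed_sphereAlg v)
    (fun i ↦ shiftWeight_nonneg (one_pos.trans hq') t i.2) ?_
  have hg := hv.gammaWeight_base_change_mem_diagonalWeights hq hq' t.isLt.le
  have hg_succ := hv.gammaWeight_base_change_mem_diagonalWeights hq hq' t.isLt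
  convert sub_mem (pow_mem hg 2)
    (Subalgebra.smul_mem _ (pow_mem hg_succ 2) (q' ^ (-2 : ℤ))) using 1
  exact funext fun i ↦ shiftWeight_sq hq' t i.2

theorem apply_zero_mem_sphereAlg (hq : 1 < q) (hq' : 1 < q') (hv : IsVFamily q v)
    (hv' : IsVFamily q' v') : v' 0 ∈ sphereAlg v := by
  have hg (i : ℤ × (Fin n → ℕ)) := (gammaWeight_pos (one_pos.trans hq) n i.2).le
  have hg' (i : ℤ × (Fin n → ℕ)) := (gammaWeight_pos (one_pos.trans hq') n i.2).le
  refine hv.isWeightedShift_zero.mem_of_tendsto (isClosed_sphereAlg v) (add_left_injective _)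
    (apply_mem_sphereAlg v 0) hg hv'.isWeightedShift_zero
    (hv.gammaWeight_base_change_mem_diagonalWeights hq hq' le_rfl) ?_
  exact tendsto_comap_of_le_rpow one_pos (Real.logb_pos hq hq') hg (fun i ↦ (one_mul _).le) hg'
    fun i ↦ (gammaWeight_eq_rpow_logb hq (one_pos.trans hq') n i.2).le

theorem apply_succ_mem_sphereAlg (hq : 1 < q) (hq' : 1 < q') (hv : IsVFamily q v)
    (hv' : IsVFamily q' v') (j : Fin n) : v' j.succ ∈ sphereAlg v := by
  have hq₀ : 0 < q := one_pos.trans hq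
  have hq'₀ : 0 < q' := one_pos.trans hq'
  refine (hv.isWeightedShift_succ j).mem_of_tendsto (isClosed_sphereAlg v) (add_left_injective _)
    (apply_mem_sphereAlg v _) (fun i ↦ shiftWeight_nonneg hq₀ _ i.2) (hv'.isWeightedShift_succ j)
    (hv.shiftWeight_base_change_mem_diagonalWeights hq hq' _) ?_
  have hC : 0 < √(1 - q ^ (-2 : ℤ)) :=
    Real.sqrt_pos.mpr (sub_pos.mpr (zpow_lt_one_of_neg₀ hq (by norm_num)))
  refine tendsto_comap_of_le_rpow hC (Real.logb_pos hq hq')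
    (fun i ↦ (gammaWeight_pos hq₀ _ i.2).le) (fun i ↦ mul_gammaWeight_le_shiftWeight hq _ i.2)
    (fun i ↦ shiftWeight_nonneg hq'₀ _ i.2) fun i ↦ ?_
  rw [← gammaWeight_eq_rpow_logb hq hq'₀]
  exact shiftWeight_le_gammaWeight hq'₀ _ i.2

theorem sphereAlg_le (hq : 1 < q) (hq' : 1 < q') (hv : IsVFamily q v) (hv' : IsVFamily q' v') :
    sphereAlg v' ≤ sphereAlg v := by
  refine StarSubalgebra.topologicalClosure_minimal ?_ (isClosed_sphereAlg v)
  rw [StarAlgebra.adjoin_le_iff]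
  rintro _ ⟨i, rfl⟩
  refine Fin.cases ?_ (fun j ↦ ?_) i
  · exact hv.apply_zero_mem_sphereAlg hq hq' hv'
  · exact hv.apply_succ_mem_sphereAlg hq hq' hv' j

theorem sphereAlg_eq (hq : 1 < q) (hq' : 1 < q') (hv : IsVFamily q v) (hv' : IsVFamily q' v') :
    sphereAlg v = sphereAlg v' :=
  le_antisymm (hv'.sphereAlg_le hq' hq hv) (hv.sphereAlg_le hq hq' hv')

end IsVFamily

end QuantumSphere

/-- For every integer `n ≥ 1` and all reals `q, q' > 1`, the concrete quantum sphere
C*-algebras `A_n(q)` and `A_n(q')` are isomorphic as unital C*-algebras (both being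
isomorphic to the groupoid C*-algebra `C*(𝔉_n)`); in particular `C(S_q^{2n+1})` is
independent of `q`. -/
theorem stmt_6 (n : ℕ) (hn : 1 ≤ n) (q q' : ℝ) (hq : 1 < q) (hq' : 1 < q')
    (v : Fin (n + 1) → (HZ n →L[ℂ] HZ n)) (v' : Fin (n + 1) → (HZ n →L[ℂ] HZ n))
    (hv : IsVFamily q v) (hv' : IsVFamily q' v') :
    Nonempty ((sphereAlg v) ≃⋆ₐ[ℂ] (sphereAlg v')) := by
  rw [hv.sphereAlg_eq hq hq' hv']
  exact ⟨.refl ℂ _⟩
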